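/- Fix q ∈ (0,1), and let L be the positive integer satisfying (L−1)/L < q ≤ L/(L+1). Then (1−q) q^{L−1} L > 1/e. -/

import Mathlib

open Finset Filter

/-- The number of inversions of a permutation of `Fin n`. -/
def invCount (n : ℕ) (σ : Equiv.Perm (Fin n)) : ℕ :=
  (Finset.univ.filter (fun p : Fin n × Fin n => p.1 < p.2 ∧ σ p.2 < σ p.1)).card

/-- Normalization constant of the Mallows distribution:
`Z_n(q) = ∑_{σ ∈ S_n} q^{inv σ}`. -/
noncomputable def mallowsZ (n : ℕ) (q : ℝ) : ℝ :=
  ∑ σ : Equiv.Perm (Fin n), q ^ invCount n σ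

/-- The Mallows probability of a set `A` of permutations:
`P_n^q(A) = (∑_{σ ∈ A} q^{inv σ}) / Z_n(q)`. -/
noncomputable def mallowsProb (n : ℕ) (q : ℝ) (A : Finset (Equiv.Perm (Fin n))) : ℝ :=
  (∑ σ ∈ A, q ^ invCount n σ) / mallowsZ n q

/-- The success event for the strategy `S(n,M)`.  Positions are indexed by `Fin n`
(the index `i : Fin n` represents the `(i+1)`-st arriving item) and ranks are the
values of `σ` (the value `n-1`, i.e. the top of `Fin n`, represents the highest
rank `n`).  For `M ≥ 1` the strategy succeeds iff for some position `j` with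
`(j:ℕ) ≥ M` (i.e. item number `j+1 ≥ M+1`) the item at position `j` has the top
rank and the maximum rank among the items strictly before position `j` equals the
maximum rank among the first `M` items.  For `M = 0` it succeeds iff the first
item has top rank. -/
def winEvent (n M : ℕ) : Finset (Equiv.Perm (Fin n)) :=
  if M = 0 then
    Finset.univ.filter (fun σ => ∀ i : Fin n, (i : ℕ) = 0 → (σ i : ℕ) = n - 1)
  else
    Finset.univ.filter (fun σ => ∃ j : Fin n, M ≤ (j : ℕ) ∧ (σ j : ℕ) = n - 1 ∧
      (Finset.univ.filter (fun i : Fin n => i < j)).sup (fun i => (σ i : ℕ)) =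
      (Finset.univ.filter (fun i : Fin n => (i : ℕ) < M)).sup (fun i => (σ i : ℕ)))

/-- `𝒫_n^q(S(n,M))`, the success probability of the strategy `S(n,M)` under the
Mallows distribution with parameter `q`. -/
noncomputable def succProb (n M : ℕ) (q : ℝ) : ℝ := mallowsProb n q (winEvent n M)

/-! The function `x ↦ (1 - x) * x ^ s` decreases to the right of its critical point
`s / (s + 1)`. With `s = L - 1` this critical point is `(L - 1) / L`, so on
`[(L - 1) / L, L / (L + 1)]` the function times `L` is smallest at the right endpoint, where it
equals `(L / (L + 1)) ^ L = (1 + 1 / L) ^ (-L) > e⁻¹`. -/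

theorem strictAntiOn_one_sub_mul_rpow {s : ℝ} (hs : -1 < s) :
    StrictAntiOn (fun x : ℝ ↦ (1 - x) * x ^ s) (Set.Ioi 0 ∩ Set.Ici (s / (s + 1))) := by
  refine strictAntiOn_of_deriv_neg ((convex_Ioi 0).inter (convex_Ici _)) ?_ ?_
  · exact (continuousOn_const.sub continuousOn_id).mul
      (continuousOn_id.rpow_const fun x hx ↦ .inl hx.1.ne')
  · rw [interior_inter, interior_Ioi, interior_Ici]
    rintro x ⟨hx, hsx⟩
    have hx0 : x ≠ 0 := hx.ne'
    have hderiv :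
        HasDerivAt (fun y : ℝ ↦ (1 - y) * y ^ s) (x ^ (s - 1) * (s - x * (s + 1))) x := by
      refine (((hasDerivAt_id' x).const_sub 1).mul
        (Real.hasDerivAt_rpow_const (.inl hx0))).congr_deriv ?_
      rw [Real.rpow_sub_one hx0]
      field_simp
      ring
    rw [hderiv.deriv]
    have hcrit : s < x * (s + 1) := (div_lt_iff₀ (by linarith)).1 hsx
    exact mul_neg_of_pos_of_neg (Real.rpow_pos_of_pos hx _) (sub_neg.2 hcrit)

theorem inv_exp_one_lt_div_add_one_rpow {x : ℝ} (hx : 0 < x) :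
    (Real.exp 1)⁻¹ < (x / (x + 1)) ^ x := by
  have hbase : (x / (x + 1))⁻¹ < Real.exp (1 / x) :=
    calc (x / (x + 1))⁻¹ = 1 / x + 1 := by field_simp; ring
      _ < Real.exp (1 / x) := Real.add_one_lt_exp (by positivity)
  have hpow : ((x / (x + 1)) ^ x)⁻¹ < Real.exp 1 :=
    calc ((x / (x + 1)) ^ x)⁻¹ = (x / (x + 1))⁻¹ ^ x := (Real.inv_rpow (by positivity) x).symm
      _ < Real.exp (1 / x) ^ x := Real.rpow_lt_rpow (by positivity) hbase hx
      _ = Real.exp 1 := by rw [← Real.exp_mul, one_div_mul_cancel hx.ne']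
  exact inv_lt_of_inv_lt₀ (by positivity) hpow

theorem stmt_12_general {q L : ℝ} (hq : 0 < q) (hL : 0 < L) (hLq : (L - 1) / L ≤ q)
    (hqL : q ≤ L / (L + 1)) : (Real.exp 1)⁻¹ < (1 - q) * q ^ (L - 1) * L := by
  have hanti : AntitoneOn (fun x : ℝ ↦ (1 - x) * x ^ (L - 1))
      (Set.Ioi 0 ∩ Set.Ici ((L - 1) / L)) := by
    simpa only [sub_add_cancel] using
      (strictAntiOn_one_sub_mul_rpow (s := L - 1) (by linarith)).antitoneOn
  set r := L / (L + 1) with hr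
  have hr0 : 0 < r := by positivity
  calc (Real.exp 1)⁻¹ < r ^ L := inv_exp_one_lt_div_add_one_rpow hL
    _ = (1 - r) * r ^ (L - 1) * L := by
      rw [Real.rpow_sub_one hr0.ne', hr]
      field_simp
      ring
    _ ≤ (1 - q) * q ^ (L - 1) * L := by
      gcongr ?_ * L
      exact hanti ⟨hq, hLq⟩ ⟨hr0, hLq.trans hqL⟩ hqL

theorem stmt_12 (q : ℝ) (hq : q ∈ Set.Ioo (0 : ℝ) 1) (L : ℕ) (hL : 1 ≤ L)
    (hL1 : ((L : ℝ) - 1) / L < q) (hL2 : q ≤ (L : ℝ) / ((L : ℝ) + 1)) :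
    (1 - q) * q ^ (L - 1) * L > (Real.exp 1)⁻¹ := by
  simpa only [← Real.rpow_natCast, Nat.cast_sub hL, Nat.cast_one] using
    stmt_12_general hq.1 (Nat.cast_pos.2 hL) hL1.le hL2
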